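/- Upper bound for the d-dimensional discrete kernel: Let h > 0, d ≥ 1, s ∈ (0,1). For every m ∈ ℤ^d \ {0}, writing ‖m‖₁ := Σ_{i=1}^d |m_i|, one has K_s^h(m) ≤ h^{−2s} · 2^{d(d+2s−1)} 4^s Γ(d/2 + s) Γ(‖m‖₁ − s) / ( π^{d/2} |Γ(−s)| Γ(‖m‖₁ + d + s) ). -/

import Mathlib

open scoped BigOperators
open MeasureTheory

/-- Modified Bessel function of the first kind of integer order `k`. -/
noncomputable def besselI (k : ℤ) (t : ℝ) : ℝ :=
  ∑' ℓ : ℕ, (t / 2) ^ (2 * ℓ + k.natAbs) /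
    ((Nat.factorial ℓ : ℝ) * Real.Gamma ((ℓ : ℝ) + (k.natAbs : ℝ) + 1))

/-- Semidiscrete heat kernel `G(m,t) = e^{-2dt} ∏ I_{m_i}(2t)` on `ℤ^d`. -/
noncomputable def heatG (d : ℕ) (m : Fin d → ℤ) (t : ℝ) : ℝ :=
  Real.exp (-(2 * (d : ℝ) * t)) * ∏ i, besselI (m i) (2 * t)

/-- The discrete kernel `K_s^h(m)`, with `K_s^h(0) = 0`. -/
noncomputable def Ksh (d : ℕ) (h s : ℝ) (m : Fin d → ℤ) : ℝ :=
  if m = 0 then 0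
  else h ^ (-(2 * s)) * |Real.Gamma (-s)|⁻¹ *
    ∫ t in Set.Ioi (0 : ℝ), heatG d m t / t ^ (1 + s)

/-- Membership in the space `ℓ_s`. -/
def memLs (d : ℕ) (s : ℝ) (u : (Fin d → ℤ) → ℝ) : Prop :=
  Summable fun m : Fin d → ℤ =>
    |u m| * (1 + Real.sqrt (∑ i, ((m i : ℝ)) ^ 2)) ^ (-((d : ℝ) + 2 * s))

/-- The fractional discrete Laplacian `(-Δ_d)^s u_j = ∑_{m} (u_j - u_m) K_s^h(j-m)`
(the `m = j` term vanishes since `K_s^h(0) = 0`). -/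
noncomputable def fracLap (d : ℕ) (h s : ℝ) (u : (Fin d → ℤ) → ℝ) (j : Fin d → ℤ) : ℝ :=
  ∑' m : Fin d → ℤ, (u j - u m) * Ksh d h s (j - m)

/-!
The product `∏ I_{m_i}(t)` is dominated by a single modified Bessel function of real order
`ν = ‖m‖₁ + (d - 1) / 2` at the argument `d t`. Indeed, by the multinomial theorem, the coefficients
of the two power series can be compared through `Γ(N + (d + 1) / 2) ≤ Γ((d + 1) / 2) d ^ N ∏ j_i!`
for `N = ∑ j_i`, an inequality that reduces to equidistributed `j` and then to AM-GM on blocks of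
`d` consecutive factors of the Pochhammer product. The remaining integral is the Mellin transform of
`e⁻ˣ I_ν(x)`, whose power series is a hypergeometric series at `1`: Gauss's summation and the
duplication formula turn it into the quotient of Gamma values in the bound. What is left is an
elementary estimate of constants depending only on `d` and `s`.
-/

section Combinatorics

open Finset
open scoped Nat

variable {𝕜 : Type*} [Field 𝕜] [LinearOrder 𝕜] [IsStrictOrderedRing 𝕜]

theorem prod_range_add_natCast_le {y : 𝕜} (hy : 0 ≤ y) (n : ℕ) :
    ∏ i ∈ range n, (y + i) ≤ (y + (n - 1) / 2) ^ n := by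
  obtain rfl | hn := n.eq_zero_or_pos
  · simp
  have hn' : (1 : 𝕜) ≤ n := mod_cast hn
  have hmid : 0 ≤ y + ((n : 𝕜) - 1) / 2 := by linarith
  refine le_of_sq_le_sq ?_ (pow_nonneg hmid n)
  calc (∏ i ∈ range n, (y + i)) ^ 2
      = ∏ i ∈ range n, (y + i) * (y + (n - 1 - i : ℕ)) := by
        rw [prod_mul_distrib, prod_range_reflect (fun i : ℕ => y + (i : 𝕜)) n, sq]
    _ ≤ ∏ _i ∈ range n, (y + (n - 1) / 2) ^ 2 := by
        -- AM-GM for the factors of index `i` and `n - 1 - i`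
        refine prod_le_prod (fun i _ => by positivity) fun i hi => ?_
        have hi' : i + (n - 1 - i) + 1 = n := by have := mem_range.1 hi; omega
        have hcast : (i : 𝕜) + (n - 1 - i : ℕ) + 1 = n := mod_cast hi'
        rw [← hcast]
        linarith [sq_nonneg ((i : 𝕜) - (n - 1 - i : ℕ))]
    _ = ((y + (n - 1) / 2) ^ n) ^ 2 := by
        rw [prod_const, card_range, pow_right_comm]

theorem prod_range_block_le {d r : ℕ} (q : ℕ) (hr : r ≤ d) :
    ∏ i ∈ range r, ((d + 1) / 2 + (q * d + i : ℕ) : 𝕜) ≤ (d * (q + 1)) ^ r := by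
  have hrd : (r : 𝕜) ≤ d := mod_cast hr
  calc ∏ i ∈ range r, ((d + 1) / 2 + (q * d + i : ℕ) : 𝕜)
      = ∏ i ∈ range r, ((d + 1) / 2 + q * d + i : 𝕜) := by
        refine prod_congr rfl fun i _ => ?_
        push_cast; ring
    _ ≤ ((d + 1) / 2 + q * d + (r - 1) / 2) ^ r :=
        prod_range_add_natCast_le (by positivity) r
    _ ≤ (d * (q + 1)) ^ r := by
        obtain rfl | hr0 := r.eq_zero_or_pos
        · simp
        have : (1 : 𝕜) ≤ r := mod_cast hr0
        have hq : 0 ≤ (q : 𝕜) * d := by positivity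
        exact pow_le_pow_left₀ (by linarith) (by linarith) r

theorem prod_range_half_add_le {d r : ℕ} (q : ℕ) (hr : r ≤ d) :
    ∏ k ∈ range (q * d + r), ((d + 1) / 2 + k : 𝕜) ≤
      d ^ (q * d + r) * ((q ! : 𝕜) ^ d * (q + 1) ^ r) := by
  induction q generalizing r with
  | zero =>
    have hblock := prod_range_block_le (𝕜 := 𝕜) 0 hr
    simpa using hblock
  | succ q ih =>
    have hfull := ih le_rfl
    rw [← add_one_mul] at hfull
    rw [prod_range_add]
    calc (∏ k ∈ range ((q + 1) * d), ((d + 1) / 2 + k : 𝕜)) *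
          ∏ i ∈ range r, ((d + 1) / 2 + ((q + 1) * d + i : ℕ) : 𝕜)
        ≤ d ^ ((q + 1) * d) * ((q ! : 𝕜) ^ d * (q + 1) ^ d) * (d * ((q + 1 : ℕ) + 1)) ^ r :=
          mul_le_mul hfull (prod_range_block_le (q + 1) hr)
            (prod_nonneg fun _ _ => by positivity) (by positivity)
      _ = d ^ ((q + 1) * d + r) * (((q + 1)! : 𝕜) ^ d * ((q + 1 : ℕ) + 1) ^ r) := by
          rw [Nat.factorial_succ, Nat.cast_mul, mul_pow, mul_pow]
          push_cast
          ring

theorem factorial_mul_pow_succ_le (q j : ℕ) : q ! * (q + 1) ^ j ≤ j ! * (q + 1) ^ q := by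
  obtain ⟨k, rfl⟩ | ⟨k, rfl⟩ := (le_total q j).imp Nat.exists_eq_add_of_le Nat.exists_eq_add_of_le
  · calc q ! * (q + 1) ^ (q + k) = (q ! * (q + 1) ^ k) * (q + 1) ^ q := by ring
      _ ≤ (q + k)! * (q + 1) ^ q := by gcongr; exact Nat.factorial_mul_pow_le_factorial
  · calc (j + k)! * (j + k + 1) ^ j = j ! * (j + 1).ascFactorial k * (j + k + 1) ^ j := by
          rw [Nat.factorial_mul_ascFactorial]
      _ ≤ j ! * (j + k + 1) ^ k * (j + k + 1) ^ j := by
          gcongr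
          exact (Nat.ascFactorial_le_pow_add j k).trans
            (Nat.pow_le_pow_left (Nat.le_succ _) k)
      _ = j ! * (j + k + 1) ^ (j + k) := by ring

theorem factorial_pow_mul_le_prod_factorial {ι : Type*} [Fintype ι] {q r : ℕ} {j : ι → ℕ}
    (hj : ∑ i, j i = q * Fintype.card ι + r) :
    q ! ^ Fintype.card ι * (q + 1) ^ r ≤ ∏ i, (j i)! := by
  set d := Fintype.card ι
  refine Nat.le_of_mul_le_mul_right (c := (q + 1) ^ (q * d)) ?_ (by positivity)
  calc q ! ^ d * (q + 1) ^ r * (q + 1) ^ (q * d)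
      = ∏ i, q ! * (q + 1) ^ j i := by
        rw [prod_mul_distrib, prod_const, card_univ, prod_pow_eq_pow_sum, hj]
        ring
    _ ≤ ∏ i, (j i)! * (q + 1) ^ q := prod_le_prod' fun i _ => factorial_mul_pow_succ_le q (j i)
    _ = (∏ i, (j i)!) * (q + 1) ^ (q * d) := by
        rw [prod_mul_distrib, prod_const, card_univ, pow_mul]

theorem prod_range_half_card_add_le {ι : Type*} [Fintype ι] (j : ι → ℕ) :
    ∏ k ∈ range (∑ i, j i), ((Fintype.card ι + 1) / 2 + k : 𝕜) ≤
      (Fintype.card ι : 𝕜) ^ (∑ i, j i) * ∏ i, ((j i)! : 𝕜) := by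
  set d := Fintype.card ι
  set N := ∑ i, j i with hN
  obtain hd | hd := d.eq_zero_or_pos
  · have : IsEmpty ι := Fintype.card_eq_zero_iff.1 hd
    simp [hN]
  have hdiv : N / d * d + N % d = N := Nat.div_add_mod' N d
  calc ∏ k ∈ range N, ((d + 1) / 2 + k : 𝕜)
      ≤ d ^ N * (((N / d)! : 𝕜) ^ d * ((N / d : ℕ) + 1) ^ (N % d)) := by
        have h := prod_range_half_add_le (𝕜 := 𝕜) (N / d) (Nat.mod_lt N hd).le
        rwa [hdiv] at h
    _ ≤ d ^ N * ∏ i, ((j i)! : 𝕜) := by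
        gcongr
        exact_mod_cast factorial_pow_mul_le_prod_factorial hdiv.symm

theorem sum_piAntidiag_prod_pow_div_factorial {ι : Type*} [DecidableEq ι] (s : Finset ι)
    (x : ι → 𝕜) (n : ℕ) :
    ∑ ℓ ∈ piAntidiag s n, ∏ i ∈ s, x i ^ ℓ i / (ℓ i)! = (∑ i ∈ s, x i) ^ n / n ! := by
  rw [sum_pow_eq_sum_piAntidiag, sum_div]
  refine sum_congr rfl fun ℓ hℓ => ?_
  have hmultinomial : (∏ i ∈ s, ((ℓ i)! : 𝕜)) * Nat.multinomial s ℓ = n ! := by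
    rw [← (mem_piAntidiag.1 hℓ).1]
    exact_mod_cast Nat.multinomial_spec s ℓ
  have hprod : ∏ i ∈ s, ((ℓ i)! : 𝕜) ≠ 0 := prod_ne_zero_iff.2 fun i _ => by positivity
  rw [prod_div_distrib, div_eq_div_iff hprod (by positivity), ← hmultinomial]
  ring

theorem ascPochhammer_eval_eq_prod_range {R : Type*} [CommSemiring R] (n : ℕ) (x : R) :
    (ascPochhammer R n).eval x = ∏ k ∈ range n, (x + k) := by
  induction n with
  | zero => simp
  | succ n ih => rw [ascPochhammer_succ_eval, ih, prod_range_succ]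

end Combinatorics

section SeriesAndIntegrals

open Finset Filter

theorem prod_tsum_le_tsum_of_sum_piAntidiag_le {ι : Type*} [Fintype ι] [DecidableEq ι]
    {f : ι → ℕ → ℝ} {g : ℕ → ℝ} (hf₀ : ∀ i n, 0 ≤ f i n) (hf : ∀ i, Summable (f i))
    (hg : Summable g) (hfg : ∀ n, ∑ ℓ ∈ piAntidiag univ n, ∏ i, f i (ℓ i) ≤ g n) :
    ∏ i, ∑' n, f i n ≤ ∑' n, g n := by
  have hg₀ (n : ℕ) : 0 ≤ g n :=
    (sum_nonneg fun ℓ _ => prod_nonneg fun i _ => hf₀ i (ℓ i)).trans (hfg n)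
  refine le_of_tendsto'
    (tendsto_finsetProd univ fun i _ => (hf i).hasSum.tendsto_sum_nat) fun L => ?_
  have hbox : ∀ ℓ ∈ Fintype.piFinset fun _ : ι => range L,
      ∑ i, ℓ i ∈ range (Fintype.card ι * L + 1) := fun ℓ hℓ =>
    mem_range_succ_iff.2 <| by
      simpa using sum_le_card_nsmul univ ℓ L fun i _ =>
        (mem_range.1 (Fintype.mem_piFinset.1 hℓ i)).le
  calc ∏ i, ∑ n ∈ range L, f i n
      = ∑ n ∈ range (Fintype.card ι * L + 1),
          ∑ ℓ ∈ Fintype.piFinset (fun _ : ι => range L) with ∑ i, ℓ i = n, ∏ i, f i (ℓ i) := by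
        rw [prod_univ_sum, sum_fiberwise_of_maps_to hbox]
    _ ≤ ∑ n ∈ range (Fintype.card ι * L + 1),
          ∑ ℓ ∈ piAntidiag univ n, ∏ i, f i (ℓ i) := by
        refine sum_le_sum fun n _ => sum_le_sum_of_subset_of_nonneg (fun ℓ hℓ => ?_)
          fun ℓ _ _ => prod_nonneg fun i _ => hf₀ i (ℓ i)
        exact mem_piAntidiag.2 ⟨(mem_filter.1 hℓ).2, fun i _ => mem_univ i⟩
    _ ≤ ∑ n ∈ range (Fintype.card ι * L + 1), g n := sum_le_sum fun n _ => hfg n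
    _ ≤ ∑' n, g n := hg.sum_le_tsum _ fun n _ => hg₀ n

theorem hasSum_integral_of_nonneg {α : Type*} [MeasurableSpace α] {μ : Measure α}
    {F : ℕ → α → ℝ} {f : α → ℝ} (hF : ∀ n, AEStronglyMeasurable (F n) μ)
    (hF₀ : ∀ n, 0 ≤ᵐ[μ] F n) (hf : Integrable f μ)
    (hsum : ∀ᵐ a ∂μ, HasSum (fun n => F n a) (f a)) :
    HasSum (fun n => ∫ a, F n a ∂μ) (∫ a, f a ∂μ) :=
  hasSum_integral_of_dominated_convergence F hF
    (fun n => (hF₀ n).mono fun _ ha => (Real.norm_of_nonneg ha).le)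
    (hsum.mono fun _ ha => ha.summable)
    (hf.congr (hsum.mono fun _ ha => ha.tsum_eq.symm)) hsum

end SeriesAndIntegrals

section GammaFunction

open Real Set
open scoped Nat

theorem Gamma_add_natCast {x : ℝ} (hx : ∀ k : ℕ, x ≠ -k) (n : ℕ) :
    Gamma (x + n) = (ascPochhammer ℝ n).eval x * Gamma x := by
  induction n with
  | zero => simp
  | succ n ih =>
    have hxn : x + n ≠ 0 := fun h => hx n (eq_neg_of_add_eq_zero_left h)
    rw [Nat.cast_succ, ← add_assoc, Gamma_add_one hxn, ih, ascPochhammer_succ_eval]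
    ring

theorem setIntegral_rpow_mul_one_sub_rpow {a b : ℝ} (ha : 0 < a) (hb : 0 < b) :
    ∫ x in Ioo (0 : ℝ) 1, x ^ (a - 1) * (1 - x) ^ (b - 1) = ProbabilityTheory.beta a b := by
  rw [ProbabilityTheory.beta_eq_betaIntegralReal a b ha hb, Complex.betaIntegral,
    intervalIntegral.integral_of_le zero_le_one, integral_Ioc_eq_integral_Ioo,
    ← RCLike.re_eq_complex_re, ← integral_re]
  · refine setIntegral_congr_fun measurableSet_Ioo fun x hx => ?_
    have h1x : 0 ≤ 1 - x := (sub_pos.2 hx.2).le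
    simp only [RCLike.re_eq_complex_re]
    rw [← Complex.ofReal_re (x ^ (a - 1) * (1 - x) ^ (b - 1)), Complex.ofReal_mul,
      Complex.ofReal_cpow hx.1.le, Complex.ofReal_cpow h1x]
    push_cast
    rfl
  · have h := Complex.betaIntegral_convergent (u := a) (v := b) (by simpa) (by simpa)
    exact (intervalIntegrable_iff_integrableOn_Ioo_of_le zero_le_one).1 h

theorem integrableOn_rpow_mul_one_sub_rpow {a b : ℝ} (ha : 0 < a) (hb : 0 < b) :
    IntegrableOn (fun x : ℝ => x ^ (a - 1) * (1 - x) ^ (b - 1)) (Ioo 0 1) := by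
  refine .of_integral_ne_zero ?_
  rw [setIntegral_rpow_mul_one_sub_rpow ha hb]
  exact (ProbabilityTheory.beta_pos ha hb).ne'

theorem hasSum_Gamma_add_div_factorial_mul_pow {a x : ℝ} (ha : ∀ k : ℕ, a ≠ -k) (hx : |x| < 1) :
    HasSum (fun n : ℕ => Gamma (a + n) / n ! * x ^ n) (Gamma a * (1 - x) ^ (-a)) := by
  have hcoeff (n : ℕ) : Gamma (a + n) / n ! = Gamma a * Ring.choose (a + n - 1) n := by
    rw [← Ring.multichoose_eq, Gamma_add_natCast ha, ← Polynomial.ascPochhammer_smeval_eq_eval,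
      ← Ring.factorial_nsmul_multichoose_eq_ascPochhammer, nsmul_eq_mul]
    field_simp
  have hseries := (one_div_one_sub_rpow_hasFPowerSeriesOnBall_zero a).hasSum (y := x)
    (by simpa [enorm_eq_nnnorm, ← NNReal.coe_lt_coe] using hx)
  simp_rw [hcoeff, mul_assoc]
  refine HasSum.mul_left _ ?_
  rw [rpow_neg (by linarith [(abs_lt.1 hx).2]), ← one_div]
  simpa [mul_comm] using hseries

theorem hasSum_Gamma_add_div_factorial_mul_beta {a b c : ℝ} (ha : 0 < a) (hb : 0 < b)
    (hac : a < c) :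
    HasSum (fun n : ℕ => Gamma (a + n) / n ! * ProbabilityTheory.beta (b + n) c)
      (Gamma a * ProbabilityTheory.beta b (c - a)) := by
  have hc : 0 < c := ha.trans hac
  have hca : 0 < c - a := sub_pos.2 hac
  have hbn (n : ℕ) : 0 < b + n := by positivity
  simp_rw [← setIntegral_rpow_mul_one_sub_rpow hb hca,
    ← fun n => setIntegral_rpow_mul_one_sub_rpow (hbn n) hc, ← integral_const_mul]
  refine hasSum_integral_of_nonneg (fun n => (by fun_prop : Measurable _).aestronglyMeasurable)
    (fun n => ?_) ((integrableOn_rpow_mul_one_sub_rpow hb hca).const_mul _) ?_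
  · filter_upwards [ae_restrict_mem measurableSet_Ioo] with x ⟨hx0, hx1⟩
    have := sub_pos.2 hx1
    positivity
  · filter_upwards [ae_restrict_mem measurableSet_Ioo] with x ⟨hx0, hx1⟩
    have hterm (n : ℕ) : Gamma (a + n) / n ! * (x ^ (b + n - 1) * (1 - x) ^ (c - 1)) =
        Gamma (a + n) / n ! * x ^ n * (x ^ (b - 1) * (1 - x) ^ (c - 1)) := by
      rw [add_sub_right_comm, rpow_add_natCast hx0.ne']
      ring
    have hvalue : Gamma a * (x ^ (b - 1) * (1 - x) ^ (c - a - 1)) =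
        Gamma a * (1 - x) ^ (-a) * (x ^ (b - 1) * (1 - x) ^ (c - 1)) := by
      rw [show c - a - 1 = -a + (c - 1) by ring, rpow_add (sub_pos.2 hx1)]
      ring
    simp_rw [hterm, hvalue]
    exact (hasSum_Gamma_add_div_factorial_mul_pow
      (fun k => by linarith [k.cast_nonneg (α := ℝ)])
      (abs_lt.2 ⟨by linarith, hx1⟩)).mul_right _

/-- Gauss's summation of the hypergeometric series `₂F₁(a, b; c; 1)`. -/
theorem hasSum_Gamma_add_mul_Gamma_add_div {a b c : ℝ} (ha : 0 < a) (hb : 0 < b)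
    (hc : a + b < c) :
    HasSum (fun n : ℕ => Gamma (a + n) * Gamma (b + n) / (n ! * Gamma (c + n)))
      (Gamma a * Gamma b * Gamma (c - a - b) / (Gamma (c - a) * Gamma (c - b))) := by
  have hΓ : Gamma (c - b) ≠ 0 := (Gamma_pos_of_pos (by linarith)).ne'
  have h := hasSum_Gamma_add_div_factorial_mul_beta ha hb (lt_sub_iff_add_lt.2 hc)
  have hterm (n : ℕ) : Gamma (a + n) / n ! * ProbabilityTheory.beta (b + n) (c - b) =
      Gamma (a + n) * Gamma (b + n) / (n ! * Gamma (c + n)) * Gamma (c - b) := by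
    rw [ProbabilityTheory.beta, show b + n + (c - b) = c + n by ring]
    ring
  have hvalue : Gamma a * ProbabilityTheory.beta b (c - b - a) =
      Gamma a * Gamma b * Gamma (c - a - b) / (Gamma (c - a) * Gamma (c - b)) *
        Gamma (c - b) := by
    rw [ProbabilityTheory.beta, show b + (c - b - a) = c - a by ring, sub_right_comm]
    field_simp
  simp_rw [hterm, hvalue] at h
  exact (hasSum_mul_right_iff hΓ).1 h

end GammaFunction

section ModifiedBessel

open Finset Filter Real
open scoped Nat

/-- The modified Bessel function of the first kind `I_ν` of real order `ν`, through which products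
of integer-order ones are bounded. The powers are real, so only arguments `0 < t` are meaningful. -/
noncomputable def modifiedBessel (ν t : ℝ) : ℝ :=
  ∑' n : ℕ, (t / 2) ^ (2 * n + ν) / (n ! * Gamma (n + ν + 1))

theorem besselI_eq_modifiedBessel (k : ℤ) (t : ℝ) : besselI k t = modifiedBessel k.natAbs t := by
  refine tsum_congr fun n => ?_
  norm_cast

theorem summable_modifiedBessel (ν : ℝ) {t : ℝ} (ht : 0 < t) :
    Summable fun n : ℕ => (t / 2) ^ (2 * n + ν) / (n ! * Gamma (n + ν + 1)) := by
  have hmajorant := (summable_pow_div_factorial ((t / 2) ^ 2)).mul_left ((t / 2) ^ ν)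
  refine hmajorant.of_norm_bounded_eventually_nat ?_
  filter_upwards [eventually_ge_atTop ⌈1 - ν⌉₊] with n hn
  have hGamma : 1 ≤ Gamma (n + ν + 1) := by
    have h2 : 2 ≤ n + ν + 1 := by linarith [Nat.ceil_le.1 hn]
    simpa using Gamma_strictMonoOn_Ici.monotoneOn (Set.mem_Ici.2 le_rfl) h2 h2
  rw [norm_of_nonneg (by positivity), rpow_add (by positivity), rpow_mul (by positivity),
    rpow_natCast, rpow_two, mul_comm, mul_div_assoc]
  gcongr
  exact le_mul_of_one_le_right (by positivity) hGamma

theorem modifiedBessel_nonneg {ν t : ℝ} (hν : -1 ≤ ν) (ht : 0 ≤ t) : 0 ≤ modifiedBessel ν t :=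
  tsum_nonneg fun n => by
    have : 0 ≤ Gamma (n + ν + 1) :=
      Gamma_nonneg_of_nonneg (by linarith [n.cast_nonneg (α := ℝ)])
    positivity

theorem modifiedBessel_term_natCast (k n : ℕ) (t : ℝ) :
    (t / 2) ^ (2 * n + k : ℝ) / (n ! * Gamma (n + k + 1)) =
      (t / 2) ^ (2 * n + k) / (n ! * (n + k)!) := by
  rw [← Gamma_nat_eq_factorial (n + k)]
  norm_cast

theorem modifiedBessel_natCast (k : ℕ) (t : ℝ) :
    modifiedBessel k t = ∑' n : ℕ, (t / 2) ^ (2 * n + k) / (n ! * (n + k)!) :=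
  tsum_congr fun n => modifiedBessel_term_natCast k n t

variable {ι : Type*} [Fintype ι]

theorem Gamma_half_card_add_sum_le (j : ι → ℕ) :
    Gamma ((Fintype.card ι + 1) / 2 + ∑ i, j i) ≤
      (Fintype.card ι : ℝ) ^ (∑ i, j i) * (∏ i, ((j i)! : ℝ)) *
        Gamma ((Fintype.card ι + 1) / 2) := by
  have : 0 < Gamma (((Fintype.card ι : ℝ) + 1) / 2) := Gamma_pos_of_pos (by positivity)
  have hne (k : ℕ) : ((Fintype.card ι : ℝ) + 1) / 2 ≠ -k :=
    ((neg_nonpos.2 k.cast_nonneg).trans_lt (by positivity)).ne'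
  rw [Gamma_add_natCast hne, ascPochhammer_eval_eq_prod_range]
  gcongr
  exact prod_range_half_card_add_le j

theorem inv_prod_factorial_le (j : ι → ℕ) :
    (∏ i, ((j i)! : ℝ))⁻¹ ≤ Gamma ((Fintype.card ι + 1) / 2) *
      (Fintype.card ι : ℝ) ^ (∑ i, j i) / Gamma ((Fintype.card ι + 1) / 2 + ∑ i, j i) := by
  have hΓ : 0 < Gamma (((Fintype.card ι : ℝ) + 1) / 2 + (∑ i, j i : ℕ)) :=
    Gamma_pos_of_pos (by positivity)
  rw [inv_eq_one_div, div_le_div_iff₀ (by positivity) hΓ, one_mul]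
  exact (Gamma_half_card_add_sum_le j).trans_eq (by ring)

theorem sum_piAntidiag_prod_modifiedBessel_le [DecidableEq ι] (k : ι → ℕ) (n : ℕ) {x : ℝ}
    (hx : 0 ≤ x) :
    ∑ ℓ ∈ piAntidiag univ n, ∏ i, x ^ (2 * ℓ i + k i) / ((ℓ i)! * (ℓ i + k i)!) ≤
      Gamma ((Fintype.card ι + 1) / 2) * (Fintype.card ι * x) ^ (2 * n + ∑ i, k i) /
        (n ! * Gamma (n + ∑ i, k i + (Fintype.card ι + 1) / 2)) := by
  set d := Fintype.card ι
  set K := ∑ i, k i with hK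
  set C := Gamma (((d : ℝ) + 1) / 2) * d ^ (n + K) / Gamma (n + K + (d + 1) / 2)
  have hterm : ∀ ℓ ∈ piAntidiag (univ : Finset ι) n,
      ∏ i, x ^ (2 * ℓ i + k i) / ((ℓ i)! * (ℓ i + k i)!) ≤
        x ^ (2 * n + K) * C * ∏ i, (1 : ℝ) ^ ℓ i / (ℓ i)! := by
    intro ℓ hℓ
    have hℓn : ∑ i, ℓ i = n := (mem_piAntidiag.1 hℓ).1
    have hsum : ∑ i, (ℓ i + k i) = n + K := by rw [sum_add_distrib, hℓn]
    have hinv := inv_prod_factorial_le fun i => ℓ i + k i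
    rw [hsum, Nat.cast_add, add_comm (((d : ℝ) + 1) / 2)] at hinv
    calc ∏ i, x ^ (2 * ℓ i + k i) / ((ℓ i)! * (ℓ i + k i)!)
        = x ^ (2 * n + K) * (∏ i, ((ℓ i + k i)! : ℝ))⁻¹ * ∏ i, (1 : ℝ) ^ ℓ i / (ℓ i)! := by
          rw [← hℓn, hK, mul_sum, ← sum_add_distrib, ← prod_pow_eq_pow_sum, ← prod_inv_distrib,
            ← prod_mul_distrib, ← prod_mul_distrib]
          refine prod_congr rfl fun i _ => ?_
          field_simp
          simp
      _ ≤ x ^ (2 * n + K) * C * ∏ i, (1 : ℝ) ^ ℓ i / (ℓ i)! := by gcongr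
  refine (sum_le_sum hterm).trans_eq ?_
  rw [← mul_sum, sum_piAntidiag_prod_pow_div_factorial, sum_const, card_univ, nsmul_one]
  ring

theorem prod_modifiedBessel_natCast_le [Nonempty ι] (k : ι → ℕ) {t : ℝ} (ht : 0 < t) :
    ∏ i, modifiedBessel (k i) t ≤
      Gamma ((Fintype.card ι + 1) / 2) *
        (Fintype.card ι * t / 2) ^ (-(((Fintype.card ι : ℝ) - 1) / 2)) *
        modifiedBessel (∑ i, k i + ((Fintype.card ι : ℝ) - 1) / 2) (Fintype.card ι * t) := by
  classical
  set d := Fintype.card ι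
  have : 0 < (d : ℝ) := mod_cast Fintype.card_pos
  have hdt : 0 < d * t := by positivity
  simp_rw [modifiedBessel_natCast]
  rw [modifiedBessel, ← tsum_mul_left]
  refine prod_tsum_le_tsum_of_sum_piAntidiag_le (fun i n => by positivity) (fun i => ?_)
    ((summable_modifiedBessel _ hdt).mul_left _) fun n => ?_
  · simpa only [modifiedBessel_term_natCast] using summable_modifiedBessel (k i) ht
  · refine (sum_piAntidiag_prod_modifiedBessel_le k n (half_pos ht).le).trans_eq ?_
    have hpow : (d * t / 2) ^ (-(((d : ℝ) - 1) / 2)) *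
        (d * t / 2) ^ (2 * n + ((∑ i, k i : ℕ) + ((d : ℝ) - 1) / 2)) =
          (d * t / 2) ^ (2 * n + ∑ i, k i) := by
      rw [← rpow_add (by positivity), ← rpow_natCast]
      push_cast
      ring_nf
    have hΓ : n + ((∑ i, k i : ℕ) + ((d : ℝ) - 1) / 2) + 1 = n + (∑ i, k i : ℕ) + (d + 1) / 2 := by
      ring
    rw [hΓ, mul_assoc, ← mul_div_assoc, ← mul_div_assoc, hpow, ← mul_div_assoc]

end ModifiedBessel

section Mellin

open Real Set
open scoped Nat

theorem hasSum_Gamma_two_mul_add_div {ν μ : ℝ} (hνμ : 0 < ν + μ) (hμ : μ < 1 / 2) :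
    HasSum (fun n : ℕ => Gamma (2 * n + ν + μ) / (2 ^ (2 * n + ν) * (n ! * Gamma (n + ν + 1))))
      (Gamma (1 / 2 - μ) * Gamma (ν + μ) / (√π * 2 ^ μ * Gamma (ν - μ + 1))) := by
  have hgauss := (hasSum_Gamma_add_mul_Gamma_add_div (a := (ν + μ) / 2) (b := (ν + μ) / 2 + 1 / 2)
    (c := ν + 1) (by linarith) (by linarith) (by linarith)).mul_left (2 ^ (μ - 1) / √π)
  have hterm (n : ℕ) : Gamma (2 * n + ν + μ) / (2 ^ (2 * n + ν) * (n ! * Gamma (n + ν + 1))) =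
      2 ^ (μ - 1) / √π * (Gamma ((ν + μ) / 2 + n) * Gamma ((ν + μ) / 2 + 1 / 2 + n) /
        (n ! * Gamma (ν + 1 + n))) := by
    rw [add_right_comm _ (1 / 2 : ℝ), Gamma_mul_Gamma_add_half,
      show ν + 1 + n = n + ν + 1 by ring, show 2 * ((ν + μ) / 2 + n) = 2 * n + ν + μ by ring,
      show 1 - (2 * n + ν + μ) = -(2 * n + ν) - (μ - 1) by ring, rpow_sub two_pos (-_),
      rpow_neg two_pos.le]
    field_simp
  have hvalue : 2 ^ (μ - 1) / √π * (Gamma ((ν + μ) / 2) * Gamma ((ν + μ) / 2 + 1 / 2) *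
      Gamma (ν + 1 - (ν + μ) / 2 - ((ν + μ) / 2 + 1 / 2)) /
        (Gamma (ν + 1 - (ν + μ) / 2) * Gamma (ν + 1 - ((ν + μ) / 2 + 1 / 2)))) =
      Gamma (1 / 2 - μ) * Gamma (ν + μ) / (√π * 2 ^ μ * Gamma (ν - μ + 1)) := by
    have hΓ : Gamma (ν + 1 - (ν + μ) / 2) * Gamma (ν + 1 - ((ν + μ) / 2 + 1 / 2)) =
        Gamma (ν - μ + 1) * 2 ^ (μ - ν) * √π := by
      rw [mul_comm, show ν + 1 - ((ν + μ) / 2 + 1 / 2) = (ν - μ + 1) / 2 by ring,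
        show ν + 1 - (ν + μ) / 2 = (ν - μ + 1) / 2 + 1 / 2 by ring, Gamma_mul_Gamma_add_half]
      ring_nf
    have hpow : (2 : ℝ) ^ (μ - 1) * 2 ^ (1 - (ν + μ)) * 2 ^ μ = 2 ^ (μ - ν) := by
      rw [← rpow_add two_pos, ← rpow_add two_pos]
      ring_nf
    rw [hΓ, Gamma_mul_Gamma_add_half, mul_div_cancel₀ _ two_ne_zero, ← hpow,
      show ν + 1 - (ν + μ) / 2 - ((ν + μ) / 2 + 1 / 2) = 1 / 2 - μ by ring]
    field_simp
  simpa only [hterm, hvalue] using hgauss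

theorem integral_exp_neg_mul_modifiedBessel_mul_rpow {ν μ : ℝ} (hνμ : 0 < ν + μ)
    (hμ : μ < 1 / 2) :
    ∫ x in Ioi 0, exp (-x) * modifiedBessel ν x * x ^ (μ - 1) =
      Gamma (1 / 2 - μ) * Gamma (ν + μ) / (√π * 2 ^ μ * Gamma (ν - μ + 1)) := by
  have hs (n : ℕ) : 0 < 2 * n + ν + μ := by linarith [n.cast_nonneg (α := ℝ)]
  set c : ℕ → ℝ := fun n => (2 ^ (2 * n + ν) * (n ! * Gamma (n + ν + 1)))⁻¹ with hc
  set F : ℕ → ℝ → ℝ := fun n x => exp (-x) * x ^ (2 * n + ν + μ - 1) * c n with hF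
  have hc₀ (n : ℕ) : 0 ≤ c n := by
    have : 0 ≤ Gamma (n + ν + 1) :=
      Gamma_nonneg_of_nonneg (by linarith [n.cast_nonneg (α := ℝ)])
    positivity
  have hFint (n : ℕ) : IntegrableOn (F n) (Ioi 0) := (GammaIntegral_convergent (hs n)).mul_const _
  have hFvalue (n : ℕ) : ∫ x in Ioi 0, F n x =
      Gamma (2 * n + ν + μ) / (2 ^ (2 * n + ν) * (n ! * Gamma (n + ν + 1))) := by
    rw [integral_mul_const, ← Gamma_eq_integral (hs n), div_eq_mul_inv]
  have hFnorm (n : ℕ) : ∫ x in Ioi 0, ‖F n x‖ = ∫ x in Ioi 0, F n x :=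
    setIntegral_congr_fun measurableSet_Ioi fun x hx => norm_of_nonneg <|
      mul_nonneg (mul_nonneg (exp_nonneg _) (rpow_nonneg (mem_Ioi.1 hx).le _)) (hc₀ n)
  have hseries : ∀ x ∈ Ioi (0 : ℝ),
      exp (-x) * modifiedBessel ν x * x ^ (μ - 1) = ∑' n, F n x := fun x hx => by
    have hx : 0 < x := hx
    rw [modifiedBessel, ← tsum_mul_left, ← tsum_mul_right]
    refine tsum_congr fun n => ?_
    simp only [hF, hc]
    rw [add_sub_assoc, rpow_add hx, div_rpow hx.le two_pos.le]
    field_simp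
  have hsum := hasSum_Gamma_two_mul_add_div hνμ hμ
  have hsummable : Summable fun n => ∫ x in Ioi 0, ‖F n x‖ := by
    simpa only [hFnorm, hFvalue] using hsum.summable
  rw [setIntegral_congr_fun measurableSet_Ioi hseries]
  refine (hasSum_integral_of_summable_integral_norm hFint hsummable).unique ?_
  simpa only [hFvalue] using hsum

theorem integrableOn_exp_neg_mul_modifiedBessel_mul_rpow {ν μ : ℝ} (hνμ : 0 < ν + μ)
    (hμ : μ < 1 / 2) :
    IntegrableOn (fun x => exp (-x) * modifiedBessel ν x * x ^ (μ - 1)) (Ioi 0) := by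
  refine .of_integral_ne_zero ?_
  have := Gamma_pos_of_pos (sub_pos.2 hμ)
  have := Gamma_pos_of_pos hνμ
  have := Gamma_pos_of_pos (show 0 < ν - μ + 1 by linarith)
  rw [integral_exp_neg_mul_modifiedBessel_mul_rpow hνμ hμ]
  positivity

end Mellin

section HeatKernel

open Real Set

theorem heatG_nonneg {d : ℕ} (m : Fin d → ℤ) {t : ℝ} (ht : 0 ≤ t) : 0 ≤ heatG d m t := by
  refine mul_nonneg (exp_nonneg _) (Finset.prod_nonneg fun i _ => ?_)
  rw [besselI_eq_modifiedBessel]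
  exact modifiedBessel_nonneg (by linarith [(m i).natAbs.cast_nonneg (α := ℝ)]) (by positivity)

theorem heatG_le {d : ℕ} (hd : d ≠ 0) (m : Fin d → ℤ) {t : ℝ} (ht : 0 < t) :
    heatG d m t ≤ Gamma ((d + 1) / 2) * (d * t) ^ (-(((d : ℝ) - 1) / 2)) *
      (exp (-(2 * d * t)) *
        modifiedBessel (∑ i, ((m i).natAbs : ℝ) + ((d : ℝ) - 1) / 2) (2 * d * t)) := by
  have : Nonempty (Fin d) := Fin.pos_iff_nonempty.1 hd.pos
  have hprod := prod_modifiedBessel_natCast_le (fun i => (m i).natAbs) (mul_pos two_pos ht)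
  rw [Fintype.card_fin, Nat.cast_sum, mul_left_comm, mul_div_cancel_left₀ _ two_ne_zero,
    ← mul_assoc 2] at hprod
  simp_rw [heatG, besselI_eq_modifiedBessel]
  exact (mul_le_mul_of_nonneg_left hprod (exp_nonneg _)).trans_eq (by ring)

theorem heatG_div_rpow_le {d : ℕ} (hd : d ≠ 0) (m : Fin d → ℤ) (s : ℝ) {t : ℝ} (ht : 0 < t) :
    heatG d m t / t ^ (1 + s) ≤
      Gamma ((d + 1) / 2) * 2 ^ (((d : ℝ) - 1) / 2) * (2 * d) ^ (1 + s) *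
        (exp (-(2 * d * t)) *
          modifiedBessel (∑ i, ((m i).natAbs : ℝ) + ((d : ℝ) - 1) / 2) (2 * d * t) *
          (2 * d * t) ^ (-s - ((d : ℝ) - 1) / 2 - 1)) := by
  have : 0 < (d : ℝ) := mod_cast hd.pos
  have hpow : (d * t) ^ (-(((d : ℝ) - 1) / 2)) / t ^ (1 + s) =
      2 ^ (((d : ℝ) - 1) / 2) * (2 * d) ^ (1 + s) *
        (2 * d * t) ^ (-s - ((d : ℝ) - 1) / 2 - 1) := by
    rw [show -s - ((d : ℝ) - 1) / 2 - 1 = -(((d : ℝ) - 1) / 2) - (1 + s) by ring,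
      rpow_sub (by positivity), mul_rpow (x := 2 * d) (y := t) (z := 1 + s) (by positivity) ht.le,
      mul_assoc 2, mul_rpow (y := d * t) two_pos.le (by positivity), rpow_neg two_pos.le]
    field_simp
  refine (div_le_div_of_nonneg_right (heatG_le hd m ht) (by positivity)).trans_eq ?_
  linear_combination Gamma ((d + 1) / 2) * (exp (-(2 * d * t)) *
        modifiedBessel (∑ i, ((m i).natAbs : ℝ) + ((d : ℝ) - 1) / 2) (2 * d * t)) * hpow

theorem integral_heatG_div_rpow_le {d : ℕ} (hd : d ≠ 0) (m : Fin d → ℤ) {s : ℝ}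
    (hds : -(d / 2) < s) (hs : s < ∑ i, ((m i).natAbs : ℝ)) :
    ∫ t in Ioi 0, heatG d m t / t ^ (1 + s) ≤
      Gamma ((d + 1) / 2) * d ^ s * 2 ^ (2 * s + d - 1) / √π *
        (Gamma (d / 2 + s) * Gamma (∑ i, ((m i).natAbs : ℝ) - s) /
          Gamma (∑ i, ((m i).natAbs : ℝ) + d + s)) := by
  set K := ∑ i, ((m i).natAbs : ℝ)
  set ν := K + ((d : ℝ) - 1) / 2 with hν
  set μ := -s - ((d : ℝ) - 1) / 2 with hμ
  set g : ℝ → ℝ := fun x => exp (-x) * modifiedBessel ν x * x ^ (μ - 1)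
  set C := Gamma (((d : ℝ) + 1) / 2) * 2 ^ (((d : ℝ) - 1) / 2) * (2 * d) ^ (1 + s) with hC
  have h2d : 0 < 2 * (d : ℝ) := mul_pos two_pos (mod_cast hd.pos)
  have hνμ : 0 < ν + μ := by linarith
  have hμ' : μ < 1 / 2 := by linarith
  have hmajorant : IntegrableOn (fun t => C * g (2 * d * t)) (Ioi 0) := by
    refine Integrable.const_mul ((integrableOn_Ioi_comp_mul_left_iff g 0 h2d).2 ?_) C
    rw [mul_zero]
    exact integrableOn_exp_neg_mul_modifiedBessel_mul_rpow hνμ hμ'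
  calc ∫ t in Ioi 0, heatG d m t / t ^ (1 + s)
      ≤ ∫ t in Ioi 0, C * g (2 * d * t) := by
        refine integral_mono_of_nonneg ?_ hmajorant ?_ <;>
          filter_upwards [ae_restrict_mem measurableSet_Ioi] with t (ht : 0 < t)
        · exact div_nonneg (heatG_nonneg m ht.le) (rpow_nonneg ht.le _)
        · exact heatG_div_rpow_le hd m s ht
    _ = C * ((2 * (d : ℝ))⁻¹ * ∫ x in Ioi 0, g x) := by
        rw [integral_const_mul, integral_comp_mul_left_Ioi g 0 h2d, mul_zero, smul_eq_mul]
    _ = C * ((2 * (d : ℝ))⁻¹ *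
          (Gamma (d / 2 + s) * Gamma (K - s) / (√π * 2 ^ μ * Gamma (K + d + s)))) := by
        rw [integral_exp_neg_mul_modifiedBessel_mul_rpow hνμ hμ',
          show 1 / 2 - μ = d / 2 + s by rw [hμ]; ring, show ν + μ = K - s by rw [hν, hμ]; ring,
          show ν - μ + 1 = K + d + s by rw [hν, hμ]; ring]
    _ = _ := by
        have hpow : 2 ^ (((d : ℝ) - 1) / 2) * 2 ^ s / 2 ^ μ = (2 : ℝ) ^ (2 * s + d - 1) := by
          rw [← rpow_add two_pos, ← rpow_sub two_pos, hμ]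
          ring_nf
        rw [hC, ← hpow, rpow_add h2d, rpow_one, mul_rpow two_pos.le d.cast_nonneg]
        field_simp

theorem Gamma_half_add_one_mul_sqrt_pi_pow_le (n : ℕ) :
    Gamma (n / 2 + 1) * √π ^ n ≤ 2 ^ n ^ 2 := by
  induction n using Nat.twoStepInduction with
  | zero => simp
  | one =>
    rw [Nat.cast_one, Gamma_add_one one_half_pos.ne', Gamma_one_half_eq, pow_one, mul_assoc,
      mul_self_sqrt pi_nonneg]
    linarith [pi_le_four]
  | more n ih _ =>
    have hlin : ((n : ℝ) / 2 + 1) * π ≤ 2 ^ (4 * n + 4) := by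
      have hnat : 2 * n + 4 ≤ 2 ^ (4 * n + 4) :=
        (by lia : 2 * n + 4 ≤ 4 * n + 4).trans Nat.lt_two_pow_self.le
      calc ((n : ℝ) / 2 + 1) * π ≤ (n / 2 + 1) * 4 := by gcongr; exact pi_le_four
        _ = (2 * n + 4 : ℕ) := by push_cast; ring
        _ ≤ 2 ^ (4 * n + 4) := mod_cast hnat
    have harg : ((n + 2 : ℕ) : ℝ) / 2 + 1 = n / 2 + 1 + 1 := by push_cast; ring
    calc Gamma ((n + 2 : ℕ) / 2 + 1) * √π ^ (n + 2)
        = ((n / 2 + 1) * π) * (Gamma (n / 2 + 1) * √π ^ n) := by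
          rw [harg, Gamma_add_one (by positivity), pow_add, sq_sqrt pi_nonneg]
          ring
      _ ≤ 2 ^ (4 * n + 4) * 2 ^ n ^ 2 := by gcongr
      _ = 2 ^ (n + 2) ^ 2 := by rw [← pow_add]; ring_nf

theorem Gamma_half_mul_rpow_div_sqrt_pi_le {d : ℕ} (hd : d ≠ 0) {s : ℝ} (hs : 0 ≤ s) :
    Gamma ((d + 1) / 2) * d ^ s * 2 ^ (2 * s + d - 1) / √π ≤
      2 ^ ((d : ℝ) * (d + 2 * s - 1)) * 4 ^ s / π ^ ((d : ℝ) / 2) := by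
  obtain ⟨n, rfl⟩ := Nat.exists_eq_succ_of_ne_zero hd
  have hds : ((n + 1 : ℕ) : ℝ) ^ s ≤ 2 ^ (2 * s * (n + 1)) := by
    have hnat : n + 1 ≤ 2 ^ (2 * (n + 1)) :=
      (by lia : n + 1 ≤ 2 * (n + 1)).trans Nat.lt_two_pow_self.le
    rw [show 2 * s * (n + 1) = (2 * (n + 1) : ℕ) * s by push_cast; ring, rpow_mul two_pos.le,
      rpow_natCast]
    exact rpow_le_rpow (by positivity) (mod_cast hnat) hs
  have hpi : π ^ (((n + 1 : ℕ) : ℝ) / 2) = √π ^ n * √π := by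
    rw [← pow_succ, ← rpow_natCast, sqrt_eq_rpow, ← rpow_mul pi_nonneg]
    ring_nf
  have hfour : (4 : ℝ) ^ s = 2 ^ (2 * s) := by
    rw [rpow_mul two_pos.le]; norm_num
  have hexp : (2 : ℝ) ^ n ^ 2 * 2 ^ (2 * s * (n + 1)) * 2 ^ (2 * s + n) =
      2 ^ (((n + 1 : ℕ) : ℝ) * ((n + 1 : ℕ) + 2 * s - 1)) * 2 ^ (2 * s) := by
    rw [← rpow_natCast 2 (n ^ 2), ← rpow_add two_pos, ← rpow_add two_pos, ← rpow_add two_pos]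
    push_cast
    ring_nf
  have harg : (((n + 1 : ℕ) : ℝ) + 1) / 2 = n / 2 + 1 := by push_cast; ring
  have hexp' : 2 * s + ((n + 1 : ℕ) : ℝ) - 1 = 2 * s + n := by push_cast; ring
  rw [hpi, hfour, harg, hexp', div_le_div_iff₀ (by positivity) (by positivity), ← hexp]
  calc Gamma (n / 2 + 1) * ((n + 1 : ℕ) : ℝ) ^ s * 2 ^ (2 * s + n) * (√π ^ n * √π)
      = (Gamma (n / 2 + 1) * √π ^ n) * ((n + 1 : ℕ) : ℝ) ^ s * 2 ^ (2 * s + n) * √π := by ring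
    _ ≤ 2 ^ n ^ 2 * 2 ^ (2 * s * (n + 1)) * 2 ^ (2 * s + n) * √π := by
        gcongr
        exact Gamma_half_add_one_mul_sqrt_pi_pow_le n

end HeatKernel

theorem one_le_sum_natAbs {ι : Type*} [Fintype ι] {m : ι → ℤ} (hm : m ≠ 0) :
    1 ≤ ∑ i, (m i).natAbs := by
  obtain ⟨i, hi⟩ := Function.ne_iff.1 hm
  exact (Int.natAbs_pos.2 hi).trans_le
    (Finset.single_le_sum_of_canonicallyOrdered (f := fun i => (m i).natAbs) (Finset.mem_univ i))

theorem ne_natCast_of_mem_Ioo {R : Type*} [Semiring R] [PartialOrder R] [IsStrictOrderedRing R]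
    {x : R} (hx : x ∈ Set.Ioo 0 1) (n : ℕ) : x ≠ n := by
  rintro rfl
  exact (Nat.cast_pos.1 hx.1).ne' (Nat.cast_lt_one.1 hx.2)

theorem kernel_upper_bound_general (d : ℕ) (h s : ℝ) (hh : 0 < h) (hs : 0 < s)
    (hsℕ : ∀ n : ℕ, s ≠ n) (m : Fin d → ℤ) (hsm : s < ∑ i, ((m i).natAbs : ℝ)) :
    Ksh d h s m ≤
      h ^ (-(2 * s)) *
        ((2 : ℝ) ^ ((d : ℝ) * ((d : ℝ) + 2 * s - 1)) * 4 ^ s *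
          Real.Gamma ((d : ℝ) / 2 + s) *
          Real.Gamma ((∑ i, ((m i).natAbs : ℝ)) - s)) /
        (Real.pi ^ ((d : ℝ) / 2) * |Real.Gamma (-s)| *
          Real.Gamma ((∑ i, ((m i).natAbs : ℝ)) + (d : ℝ) + s)) := by
  have hm : m ≠ 0 := by
    rintro rfl
    simp [hs.not_gt] at hsm
  have hd : d ≠ 0 := by
    rintro rfl
    exact hm (Subsingleton.elim _ _)
  have hintegral := integral_heatG_div_rpow_le hd m (by linarith [d.cast_nonneg (α := ℝ)]) hsm
  set K := ∑ i, ((m i).natAbs : ℝ)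
  have hΓs : 0 < |Real.Gamma (-s)| :=
    abs_pos.2 (Real.Gamma_ne_zero fun n => neg_injective.ne (hsℕ n))
  have hratio : 0 ≤ Real.Gamma (d / 2 + s) * Real.Gamma (K - s) / Real.Gamma (K + d + s) := by
    have := Real.Gamma_pos_of_pos (sub_pos.2 hsm)
    have := Real.Gamma_pos_of_pos (show 0 < K + d + s by positivity)
    have := Real.Gamma_pos_of_pos (show 0 < (d : ℝ) / 2 + s by positivity)
    positivity
  rw [Ksh, if_neg hm, mul_assoc, mul_div_assoc]
  gcongr
  rw [inv_mul_le_iff₀ hΓs]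
  calc ∫ t in Set.Ioi 0, heatG d m t / t ^ (1 + s)
      ≤ _ := hintegral
    _ ≤ _ := mul_le_mul_of_nonneg_right (Gamma_half_mul_rpow_div_sqrt_pi_le hd hs.le) hratio
    _ = _ := by field_simp

/-- Upper bound for the `d`-dimensional discrete kernel `K_s^h(m)`. -/
theorem kernel_upper_bound (d : ℕ) (hd : 1 ≤ d) (h s : ℝ) (hh : 0 < h)
    (hs : s ∈ Set.Ioo (0 : ℝ) 1) (m : Fin d → ℤ) (hm : m ≠ 0) :
    Ksh d h s m ≤
      h ^ (-(2 * s)) *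
        ((2 : ℝ) ^ ((d : ℝ) * ((d : ℝ) + 2 * s - 1)) * 4 ^ s *
          Real.Gamma ((d : ℝ) / 2 + s) *
          Real.Gamma ((∑ i, ((m i).natAbs : ℝ)) - s)) /
        (Real.pi ^ ((d : ℝ) / 2) * |Real.Gamma (-s)| *
          Real.Gamma ((∑ i, ((m i).natAbs : ℝ)) + (d : ℝ) + s)) :=
  kernel_upper_bound_general d h s hh hs.1 (ne_natCast_of_mem_Ioo hs) m
    (hs.2.trans_le (mod_cast one_le_sum_natAbs hm))
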